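/- For every ε ∈ (0, 2/27), every constant C > 0 and every degree d ∈ ℕ, there exist arbitrarily large n ∈ ℕ, a nonnegative weight vector a ∈ ℝ^n_+ and a capacity b ≥ 0 such that the knapsack polytope P = conv{x ∈ {0,1}^n : a·x ≤ b} has the following property: every compact set Q ⊆ ℝ^n that is an ε-approximated formulation of P and is an intersection of m closed half-spaces satisfies m > C·n^d. (Hence the family of knapsack polytopes admits no polynomial-size relaxation scheme in the original space.) -/

import Mathlib

noncomputable section

/-- Dot product on `ℝ^n`. -/
def dot {d : ℕ} (c x : Fin d → ℝ) : ℝ := ∑ i, c i * x i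

/-- `Q` is an `ε`-approximated formulation of `P`: `P ⊆ Q` and for every objective `c`,
`max {c·x : x ∈ P} ≥ (1-ε) · max {c·x : x ∈ Q}` (maxima expressed via `sSup`,
both sets being compact). -/
def IsApproxFormulation {d : ℕ} (ε : ℝ) (P Q : Set (Fin d → ℝ)) : Prop :=
  P ⊆ Q ∧ ∀ c : Fin d → ℝ,
    (1 - ε) * sSup ((fun x => dot c x) '' Q) ≤ sSup ((fun x => dot c x) '' P)

/-- The knapsack polytope `conv {x ∈ {0,1}^n : a·x ≤ b}`. -/
def knapsackPolytope {n : ℕ} (a : Fin n → ℝ) (b : ℝ) : Set (Fin n → ℝ) :=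
  convexHull ℝ {x : Fin n → ℝ | (∀ i, x i = 0 ∨ x i = 1) ∧ dot a x ≤ b}

/-!
A knapsack with one heavy and `n` unit items has room, next to the heavy item, for only `k` light
ones. For a set `S` of light items, the point with coordinate `1/2` at the heavy item and the
incidence vector of `S` at the light items violates the valid inequality `(|S| - k) x₀ + x(S) ≤ |S|`
by a factor close to `3/2` when `|S|` is much larger than `k`, so an `ε`-approximated formulation
with `ε < 1/3` has to cut it off. If `|S ∩ T| ≤ k`, however, the midpoint of the points of `S` and
`T` is also the midpoint of two feasible points, with light items `S ∩ T` (next to the heavy item)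
and `S ∪ T`; hence no single half-space cuts off both. The graphs of the polynomials of degree less
than `D` over a field with `q` elements are `q ^ D` sets of `q` light items out of `q ^ 2` with
pairwise intersections smaller than `D`.
-/

section Hiding

variable {𝕜 E ι κ : Type*} [Semiring 𝕜] [PartialOrder 𝕜] [AddCommMonoid E] [SMul 𝕜 E]

variable (𝕜) in
/-- A hiding family for `Q`: points outside `Q` such that no two of them can be cut off from `Q`
by the same half-space, because the segment joining them meets `Q`. -/
def IsHidingFamily (Q : Set E) (v : κ → E) : Prop :=
  (∀ j, v j ∉ Q) ∧ Pairwise fun i j => (segment 𝕜 (v i) (v j) ∩ Q).Nonempty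

lemma IsHidingFamily.card_le [Finite ι] {K : ι → Set E} {v : κ → E}
    (hv : IsHidingFamily 𝕜 (⋂ i, K i) v) (hK : ∀ i, Convex 𝕜 (K i)ᶜ) :
    Nat.card κ ≤ Nat.card ι := by
  have hcut : ∀ j, ∃ i, v j ∈ (K i)ᶜ := fun j => by simpa using hv.1 j
  choose f hf using hcut
  refine Nat.card_le_card_of_injective f fun i j hij => ?_
  by_contra hne
  obtain ⟨x, hx, hxK⟩ := hv.2 hne
  exact (hK (f i)).segment_subset (hf i) (hij ▸ hf j) hx (Set.mem_iInter.1 hxK (f i))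

end Hiding

section Dot

variable {n : ℕ}

lemma continuous_dot (c : Fin n → ℝ) : Continuous (dot c) :=
  continuous_const.dotProduct continuous_id

lemma isLinearMap_dot (c : Fin n → ℝ) : IsLinearMap ℝ (dot c) :=
  ⟨dotProduct_add c, fun r => dotProduct_smul r c⟩

lemma IsApproxFormulation.notMem {ε r : ℝ} {P Q : Set (Fin n → ℝ)} {c y : Fin n → ℝ}
    (h : IsApproxFormulation ε P Q) (hε : ε ≤ 1) (hP : P.Nonempty) (hQ : BddAbove (dot c '' Q))
    (hr : ∀ x ∈ P, dot c x ≤ r) (hy : r < (1 - ε) * dot c y) : y ∉ Q := by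
  intro hyQ
  refine hy.not_ge ?_
  calc (1 - ε) * dot c y ≤ (1 - ε) * sSup (dot c '' Q) :=
        mul_le_mul_of_nonneg_left (le_csSup hQ ⟨y, hyQ, rfl⟩) (sub_nonneg.2 hε)
    _ ≤ sSup (dot c '' P) := h.2 c
    _ ≤ r := csSup_le (hP.image _) (Set.forall_mem_image.2 hr)

end Dot

section HeavyItem

variable {n k : ℕ}

/-- The weights of a knapsack whose item `0` is heavy and whose other `n` items have weight `1`.
For capacity `n`, the heavy item leaves room for exactly `k` light ones. -/
def heavyItemWeights (n k : ℕ) : Fin (n + 1) → ℝ := Matrix.vecCons (n - k) 1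

/-- The vector with entry `t` at the heavy item `0`, followed by the incidence vector of the set `S`
of light items. It serves both as a point of the knapsack and as an objective. -/
def heavyItemVec (t : ℝ) (S : Finset (Fin n)) : Fin (n + 1) → ℝ :=
  Matrix.vecCons t ((S : Set (Fin n)).indicator 1)

lemma heavyItemWeights_nonneg (hkn : k ≤ n) (i : Fin (n + 1)) : 0 ≤ heavyItemWeights n k i := by
  cases i using Fin.cases with
  | zero => simpa [heavyItemWeights] using hkn
  | succ i => simp [heavyItemWeights]

lemma dot_heavyItemWeights (x : Fin (n + 1) → ℝ) :
    dot (heavyItemWeights n k) x = (n - k) * x 0 + ∑ i : Fin n, x i.succ := by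
  simp [dot, heavyItemWeights, Fin.sum_univ_succ]

lemma dot_heavyItemVec (t : ℝ) (S : Finset (Fin n)) (x : Fin (n + 1) → ℝ) :
    dot (heavyItemVec t S) x = t * x 0 + ∑ i ∈ S, x i.succ := by
  simp [dot, heavyItemVec, Fin.sum_univ_succ, Set.indicator_apply]

lemma sum_heavyItemVec_succ (t : ℝ) (S T : Finset (Fin n)) :
    ∑ i ∈ S, heavyItemVec t T i.succ = (S ∩ T).card := by
  simp [heavyItemVec, Set.indicator_apply]

lemma heavyItemVec_eq_zero_or_one {t : ℝ} (ht : t = 0 ∨ t = 1) (S : Finset (Fin n))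
    (i : Fin (n + 1)) : heavyItemVec t S i = 0 ∨ heavyItemVec t S i = 1 := by
  cases i using Fin.cases with
  | zero => exact ht
  | succ i => by_cases hi : i ∈ S <;> simp [heavyItemVec, hi]

lemma heavyItemVec_mem_knapsackPolytope {t : ℝ} (ht : t = 0 ∨ t = 1) {S : Finset (Fin n)}
    (hS : (n - k) * t + S.card ≤ (n : ℝ)) :
    heavyItemVec t S ∈ knapsackPolytope (heavyItemWeights n k) n := by
  refine subset_convexHull ℝ _ ⟨heavyItemVec_eq_zero_or_one ht S, ?_⟩
  rw [dot_heavyItemWeights, sum_heavyItemVec_succ, Finset.univ_inter]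
  exact hS

lemma heavyItemVec_zero_mem_knapsackPolytope (S : Finset (Fin n)) :
    heavyItemVec 0 S ∈ knapsackPolytope (heavyItemWeights n k) n :=
  heavyItemVec_mem_knapsackPolytope (.inl rfl) (by simpa using card_finset_fin_le S)

lemma heavyItemVec_one_mem_knapsackPolytope {S : Finset (Fin n)} (hS : S.card ≤ k) :
    heavyItemVec 1 S ∈ knapsackPolytope (heavyItemWeights n k) n :=
  heavyItemVec_mem_knapsackPolytope (.inr rfl) <| by
    have : (S.card : ℝ) ≤ k := mod_cast hS
    linarith

lemma heavyItemVec_add_eq_inter_add_union {r s t u : ℝ} (h : r + s = t + u)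
    (S T : Finset (Fin n)) :
    heavyItemVec r S + heavyItemVec s T = heavyItemVec t (S ∩ T) + heavyItemVec u (S ∪ T) := by
  simp only [heavyItemVec, Matrix.cons_add_cons, h, Finset.coe_inter, Finset.coe_union]
  rw [add_comm (Set.indicator (_ ∩ _) _), Set.indicator_union_add_inter]

lemma midpoint_heavyItemVec_half_mem_knapsackPolytope {S T : Finset (Fin n)}
    (hST : (S ∩ T).card ≤ k) :
    midpoint ℝ (heavyItemVec (1 / 2) S) (heavyItemVec (1 / 2) T) ∈
      knapsackPolytope (heavyItemWeights n k) n := by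
  rw [midpoint_eq_smul_add, heavyItemVec_add_eq_inter_add_union (t := 1) (u := 0) (by norm_num),
    ← midpoint_eq_smul_add]
  exact (convex_convexHull ℝ _).midpoint_mem (heavyItemVec_one_mem_knapsackPolytope hST)
    (heavyItemVec_zero_mem_knapsackPolytope _)

lemma dot_heavyItemVec_le_card (S : Finset (Fin n)) {x : Fin (n + 1) → ℝ}
    (hx : x ∈ knapsackPolytope (heavyItemWeights n k) n) :
    dot (heavyItemVec (S.card - k) S) x ≤ S.card := by
  refine convexHull_min ?_ (convex_halfSpace_le (isLinearMap_dot _) _) hx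
  rintro y ⟨hy, hyn⟩
  have hy0 : ∀ i, 0 ≤ y i := fun i => by rcases hy i with h | h <;> simp [h]
  have hy1 : ∀ i, y i ≤ 1 := fun i => by rcases hy i with h | h <;> simp [h]
  have hS_card : ∑ i ∈ S, y i.succ ≤ S.card := by
    simpa using Finset.sum_le_card_nsmul S (fun i => y i.succ) 1 fun i _ => hy1 i.succ
  have hS_univ : ∑ i ∈ S, y i.succ ≤ ∑ i : Fin n, y i.succ :=
    Finset.sum_le_univ_sum_of_nonneg fun i : Fin n => hy0 i.succ
  rw [dot_heavyItemWeights] at hyn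
  rw [Set.mem_ofPred_eq, dot_heavyItemVec]
  rcases hy 0 with h | h <;> rw [h] at hyn ⊢ <;> linarith

lemma IsApproxFormulation.heavyItemVec_half_notMem {ε : ℝ} (hε : ε ≤ 1)
    {Q : Set (Fin (n + 1) → ℝ)} (hQ : IsCompact Q)
    (h : IsApproxFormulation ε (knapsackPolytope (heavyItemWeights n k) n) Q)
    {S : Finset (Fin n)} (hS : S.card < (1 - ε) * (((S.card : ℝ) - k) / 2 + S.card)) :
    heavyItemVec (1 / 2) S ∉ Q := by
  refine h.notMem hε ⟨_, heavyItemVec_zero_mem_knapsackPolytope ∅⟩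
    (hQ.image (continuous_dot _)).bddAbove (fun x => dot_heavyItemVec_le_card S) ?_
  rw [dot_heavyItemVec, sum_heavyItemVec_succ, Finset.inter_self]
  simpa [heavyItemVec, div_eq_mul_inv] using hS

lemma IsApproxFormulation.isHidingFamily_heavyItemVec_half {κ : Type*} {ε : ℝ} (hε : ε ≤ 1)
    {Q : Set (Fin (n + 1) → ℝ)} (hQ : IsCompact Q)
    (h : IsApproxFormulation ε (knapsackPolytope (heavyItemWeights n k) n) Q)
    {S : κ → Finset (Fin n)}
    (hS : ∀ j, (S j).card < (1 - ε) * (((S j).card - k : ℝ) / 2 + (S j).card))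
    (hinter : Pairwise fun i j => (S i ∩ S j).card ≤ k) :
    IsHidingFamily ℝ Q fun j => heavyItemVec (1 / 2) (S j) :=
  ⟨fun j => h.heavyItemVec_half_notMem hε hQ (hS j), fun _ _ hij =>
    ⟨_, midpoint_mem_segment _ _,
      h.1 (midpoint_heavyItemVec_half_mem_knapsackPolytope (hinter hij))⟩⟩

lemma IsApproxFormulation.card_le_card_halfSpaces {ι κ : Type*} [Finite ι] {ε : ℝ} (hε : ε ≤ 1)
    {A : ι → Fin (n + 1) → ℝ} {b : ι → ℝ} (hQ : IsCompact (⋂ i, {x | dot (A i) x ≤ b i}))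
    (h : IsApproxFormulation ε (knapsackPolytope (heavyItemWeights n k) n)
      (⋂ i, {x | dot (A i) x ≤ b i}))
    {S : κ → Finset (Fin n)}
    (hS : ∀ j, (S j).card < (1 - ε) * (((S j).card - k : ℝ) / 2 + (S j).card))
    (hinter : Pairwise fun i j => (S i ∩ S j).card ≤ k) :
    Nat.card κ ≤ Nat.card ι := by
  refine (h.isHidingFamily_heavyItemVec_half hε hQ hS hinter).card_le fun i => ?_
  simpa only [Set.compl_ofPred, not_le] using convex_halfSpace_gt (isLinearMap_dot (A i)) (b i)

end HeavyItem

section PolynomialGraph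

open Polynomial

/-- The graph of the function induced by a polynomial over a finite ring. -/
def polynomialGraph {R : Type*} [Semiring R] [Fintype R] (f : R[X]) : Finset (R × R) :=
  Finset.univ.map ⟨fun x => (x, f.eval x), fun _ _ h => congrArg Prod.fst h⟩

lemma card_polynomialGraph {R : Type*} [Semiring R] [Fintype R] (f : R[X]) :
    (polynomialGraph f).card = Fintype.card R :=
  Finset.card_map _

lemma mem_polynomialGraph {R : Type*} [Semiring R] [Fintype R] {f : R[X]} {z : R × R} :
    z ∈ polynomialGraph f ↔ f.eval z.1 = z.2 := by
  simp only [polynomialGraph, Finset.mem_map, Finset.mem_univ, true_and]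
  exact ⟨by rintro ⟨x, rfl⟩; rfl, fun h => ⟨z.1, Prod.ext rfl h⟩⟩

lemma card_polynomialGraph_inter_lt {R : Type*} [CommRing R] [IsDomain R] [Fintype R]
    [DecidableEq R] {f g : R[X]} {D : ℕ} (hfg : f ≠ g) (hf : f.degree < D) (hg : g.degree < D) :
    (polynomialGraph f ∩ polynomialGraph g).card < D := by
  have hmem : ∀ z ∈ polynomialGraph f ∩ polynomialGraph g,
      f.eval z.1 = z.2 ∧ g.eval z.1 = z.2 := by
    simp [mem_polynomialGraph]
  have hfst : Set.InjOn (Prod.fst : R × R → R) ↑(polynomialGraph f ∩ polynomialGraph g) :=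
    fun z hz w hw h => Prod.ext h (by rw [← (hmem z hz).1, ← (hmem w hw).1, h])
  have heval : ∀ x ∈ (polynomialGraph f ∩ polynomialGraph g).image Prod.fst,
      f.eval x = g.eval x :=
    Finset.forall_mem_image.2 fun z hz => (hmem z hz).1.trans (hmem z hz).2.symm
  by_contra! hD
  rw [← Finset.card_image_of_injOn hfst] at hD
  exact hfg (eq_of_degrees_lt_of_eval_finset_eq _ (hf.trans_le (mod_cast hD))
    (hg.trans_le (mod_cast hD)) heval)

lemma natCard_degreeLT (R : Type*) [Semiring R] (D : ℕ) :
    Nat.card (degreeLT R D) = Nat.card R ^ D := by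
  rw [Nat.card_congr (degreeLTEquiv R D).toEquiv, Nat.card_fun, Nat.card_fin]

lemma exists_finsets_card_eq_and_card_inter_lt (R : Type*) [CommRing R] [IsDomain R] [Finite R]
    {q : ℕ} (hq : Nat.card R = q) (D : ℕ) :
    ∃ S : Fin (q ^ D) → Finset (Fin (q ^ 2)),
      (∀ j, (S j).card = q) ∧ Pairwise fun i j => (S i ∩ S j).card < D := by
  classical
  have := Fintype.ofFinite R
  subst hq
  have : Finite (degreeLT R D) := Finite.of_equiv _ (degreeLTEquiv R D).toEquiv.symm
  let e : R × R ≃ Fin (Nat.card R ^ 2) :=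
    Finite.equivFinOfCardEq ((Nat.card_prod R R).trans (sq _).symm)
  let f : degreeLT R D ≃ Fin (Nat.card R ^ D) := Finite.equivFinOfCardEq (natCard_degreeLT R D)
  refine ⟨fun j => (polynomialGraph (f.symm j : R[X])).map e.toEmbedding, fun j => ?_,
    fun i j hij => ?_⟩
  · rw [Finset.card_map, card_polynomialGraph, Nat.card_eq_fintype_card]
  · simp only [← Finset.map_inter, Finset.card_map]
    exact card_polynomialGraph_inter_lt (Subtype.val_injective.ne (f.symm.injective.ne hij))
      (mem_degreeLT.1 (f.symm i).2) (mem_degreeLT.1 (f.symm j).2)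

end PolynomialGraph

lemma exists_prime_ge_and_natCast_gt (N : ℕ) (r : ℝ) : ∃ p : ℕ, p.Prime ∧ N ≤ p ∧ r < p := by
  obtain ⟨M, hM⟩ := exists_nat_gt r
  obtain ⟨p, hp, hprime⟩ := Nat.exists_infinite_primes (max N M)
  exact ⟨p, hprime, (le_max_left N M).trans hp,
    hM.trans_le (mod_cast (le_max_right N M).trans hp)⟩

lemma lt_one_sub_mul_of_div_lt {ε k s : ℝ} (hε : ε < 1 / 3)
    (h : (1 - ε) * k / (1 - 3 * ε) < s) : s < (1 - ε) * ((s - k) / 2 + s) := by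
  rw [div_lt_iff₀ (by linarith)] at h
  linarith

lemma mul_sq_add_one_pow_lt_pow {C p : ℝ} (hp : 2 ≤ p) (hC : C < p) (d : ℕ) :
    C * (p ^ 2 + 1) ^ d < p ^ (3 * d + 1) := by
  have hbase : p ^ 2 + 1 ≤ p ^ 3 := by nlinarith [sq_nonneg p]
  calc C * (p ^ 2 + 1) ^ d < p * (p ^ 2 + 1) ^ d := by gcongr
    _ ≤ p * (p ^ 3) ^ d := by gcongr
    _ = p ^ (3 * d + 1) := by ring

theorem knapsack_no_PSRS_original_space_general (ε : ℝ) (hε : ε < 1 / 3) (C : ℝ) (d N : ℕ) :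
    ∃ n : ℕ, N ≤ n ∧ ∃ (a : Fin n → ℝ) (b : ℝ), (∀ i, 0 ≤ a i) ∧ 0 ≤ b ∧
      ∀ (m : ℕ) (A : Fin m → Fin n → ℝ) (bb : Fin m → ℝ) (Q : Set (Fin n → ℝ)),
        IsCompact Q → Q = ⋂ i, {x : Fin n → ℝ | dot (A i) x ≤ bb i} →
        IsApproxFormulation ε (knapsackPolytope a b) Q →
        C * (n : ℝ) ^ d < (m : ℝ) := by
  let k := 3 * d + 1
  obtain ⟨p, hp, hNkp, hCp⟩ := exists_prime_ge_and_natCast_gt (max N k)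
    (max C ((1 - ε) * k / (1 - 3 * ε)))
  obtain ⟨hNp, hkp⟩ := max_le_iff.1 hNkp
  obtain ⟨hCp, hεp⟩ := max_lt_iff.1 hCp
  have : Fact p.Prime := ⟨hp⟩
  obtain ⟨S, hScard, hSinter⟩ :=
    exists_finsets_card_eq_and_card_inter_lt (ZMod p) (Nat.card_zmod p) k
  have hp_sq : p ≤ p ^ 2 := Nat.le_self_pow two_ne_zero p
  refine ⟨p ^ 2 + 1, (hNp.trans hp_sq).trans (Nat.le_succ _), heavyItemWeights (p ^ 2) k,
    (p ^ 2 : ℕ), heavyItemWeights_nonneg (hkp.trans hp_sq), Nat.cast_nonneg _, ?_⟩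
  rintro m A bb _ hQ rfl hP
  have hcard : p ^ k ≤ m := by
    simpa using hP.card_le_card_halfSpaces (by linarith) hQ
      (fun j => by simpa only [hScard j] using lt_one_sub_mul_of_div_lt hε hεp)
      fun _ _ hij => (hSinter hij).le
  calc C * ((p ^ 2 + 1 : ℕ) : ℝ) ^ d < (p : ℝ) ^ k := by
        simpa using mul_sq_add_one_pow_lt_pow (mod_cast hp.two_le) hCp d
    _ ≤ m := mod_cast hcard

/-- for every `ε ∈ (0, 2/27)`, every `C > 0` and every degree `d`, there exist
arbitrarily large `n`, nonnegative weights `a ∈ ℝ^n_+` and a capacity `b ≥ 0` such that every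
compact `ε`-approximated formulation of the knapsack polytope `conv {x ∈ {0,1}^n : a·x ≤ b}`
that is an intersection of `m` closed half-spaces satisfies `m > C·n^d`. Hence knapsack
polytopes admit no PSRS in the original space. -/
theorem knapsack_no_PSRS_original_space (ε : ℝ) (hε0 : 0 < ε) (hε1 : ε < 2 / 27)
    (C : ℝ) (hC : 0 < C) (d : ℕ) (N : ℕ) :
    ∃ n : ℕ, N ≤ n ∧ ∃ (a : Fin n → ℝ) (b : ℝ), (∀ i, 0 ≤ a i) ∧ 0 ≤ b ∧
      ∀ (m : ℕ) (A : Fin m → Fin n → ℝ) (bb : Fin m → ℝ) (Q : Set (Fin n → ℝ)),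
        IsCompact Q → Q = ⋂ i, {x : Fin n → ℝ | dot (A i) x ≤ bb i} →
        IsApproxFormulation ε (knapsackPolytope a b) Q →
        C * (n : ℝ) ^ d < (m : ℝ) :=
  knapsack_no_PSRS_original_space_general ε (by linarith) C d N
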